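/- arXiv:2509.00556 — 2 statements merged into one kernel-verified Lean document; each statement's English description precedes it below -/
import Mathlib

section
/- Let S be a finite set, let 𝒱 be a linear subspace of 𝒫(S) under symmetric difference over 𝔽₂ with dim(𝒱) = r, and let X₁, …, X_r and Y₁, …, Y_r be bases of 𝒱. If a, a', b, b' ∈ 𝔽₂^r are such that v_X(a) = v_Y(a') and v_X(b) = v_Y(b') and both of these Venn regions are nonempty, then v_X(a + b) = v_Y(a' + b'); i.e., the addition induced on the Venn regions of S via coordinates is independent of the choice of basis for 𝒱. -/
/-!
Evaluation at a point `x`, `A ↦ [x ∈ A] ∈ 𝔽₂`, is linear for symmetric difference, and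
`x ∈ v_X(a)` says exactly that this functional takes the value `a i` at each `X i`.
Choose `x ∈ v_X(a)` and `y ∈ v_X(b)`. Then `w ∈ S` lies in `v_X(a + b)` iff evaluation at `w`
agrees with the sum of the evaluations at `x` and `y` on every `X i`, equivalently, by
linearity, on the whole span `𝒱` (`forall_ind_iff_range`). The latter condition does not
mention the basis, and `x`, `y` serve equally for `Y`, `a'`, `b'`.
-/

open scoped symmDiff

/-- `zSet X a` is the symmetric difference of the sets `X i` over the indices `i` with
`a i = 1` (with `zSet X 0 = ∅`). -/
def zSet {α : Type*} [DecidableEq α] {r : ℕ} (X : Fin r → Finset α)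
    (a : Fin r → ZMod 2) : Finset α :=
  (Finset.univ.filter (fun i => a i = 1)).fold (· ∆ ·) ∅ X

/-- The Venn region of `S` with respect to `X₁, …, X_r` determined by `a ∈ 𝔽₂^r`. -/
def vennRegion {α : Type*} [DecidableEq α] {r : ℕ} (S : Finset α)
    (X : Fin r → Finset α) (a : Fin r → ZMod 2) : Finset α :=
  S.filter (fun x => ∀ i, x ∈ X i ↔ a i = 1)

/-- Evaluation at `x`: the indicator of `x ∈ A` with values in `𝔽₂`. -/
def ind {α : Type*} [DecidableEq α] (x : α) (A : Finset α) : ZMod 2 :=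
  if x ∈ A then 1 else 0

lemma ind_symmDiff {α : Type*} [DecidableEq α] (x : α) (A B : Finset α) :
    ind x (A ∆ B) = ind x A + ind x B := by
  have h2 : (1 : ZMod 2) + 1 = 0 := by decide
  by_cases hA : x ∈ A <;> by_cases hB : x ∈ B <;>
    simp [ind, Finset.mem_symmDiff, hA, hB, h2]

lemma ind_zSet {α : Type*} [DecidableEq α] {r : ℕ} (x : α) (X : Fin r → Finset α)
    (c : Fin r → ZMod 2) :
    ind x (zSet X c) = ∑ i with c i = 1, ind x (X i) := by
  unfold zSet
  induction (Finset.univ.filter (fun i => c i = 1)) using Finset.induction_on with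
  | empty => simp [ind]
  | insert i s hi ih => rw [Finset.fold_insert hi, Finset.sum_insert hi, ind_symmDiff, ih]

lemma zSet_single {α : Type*} [DecidableEq α] {r : ℕ} (X : Fin r → Finset α) (i : Fin r) :
    zSet X (Pi.single i 1) = X i := by
  have h : (Finset.univ.filter (fun j => (Pi.single i 1 : Fin r → ZMod 2) j = 1)) = {i} := by
    ext j
    by_cases hj : j = i <;> simp [Pi.single_apply, hj]
  unfold zSet
  rw [h, Finset.fold_singleton]
  exact symmDiff_bot (X i)

lemma mem_vennRegion_iff {α : Type*} [DecidableEq α] {r : ℕ} (S : Finset α)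
    (X : Fin r → Finset α) (a : Fin r → ZMod 2) (x : α) :
    x ∈ vennRegion S X a ↔ x ∈ S ∧ ∀ i, ind x (X i) = a i := by
  have key : ∀ (p : Prop) [Decidable p] (t : ZMod 2),
      (p ↔ t = 1) ↔ (if p then (1 : ZMod 2) else 0) = t := by
    intro p _ t
    by_cases hp : p
    · simp [hp, eq_comm]
    · simp only [hp, false_iff, if_false]
      revert t
      decide
  simp only [vennRegion, Finset.mem_filter, ind, key]

/-- A linear relation between evaluations holds on the generators `X i` iff it holds on
everything they span. -/
lemma forall_ind_iff_range {α : Type*} [DecidableEq α] {r : ℕ} (X : Fin r → Finset α)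
    (w x y : α) :
    (∀ i, ind w (X i) = ind x (X i) + ind y (X i)) ↔
      ∀ A ∈ Set.range (zSet X), ind w A = ind x A + ind y A := by
  constructor
  · rintro h _ ⟨c, rfl⟩
    simp only [ind_zSet, h, Finset.sum_add_distrib]
  · intro h i
    exact h _ ⟨Pi.single i 1, zSet_single X i⟩

lemma mem_vennRegion_add_iff {α : Type*} [DecidableEq α] {r : ℕ} (S : Finset α)
    (X : Fin r → Finset α) (a b : Fin r → ZMod 2) {x y : α}
    (hx : x ∈ vennRegion S X a) (hy : y ∈ vennRegion S X b) (w : α) :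
    w ∈ vennRegion S X (a + b) ↔
      w ∈ S ∧ ∀ A ∈ Set.range (zSet X), ind w A = ind x A + ind y A := by
  rw [mem_vennRegion_iff] at hx hy ⊢
  simp only [← forall_ind_iff_range, hx.2, hy.2, Pi.add_apply]

/-- Let `S` be a finite set and `𝒱` a linear subspace of `𝒫(S)` under symmetric
difference over `𝔽₂` with bases `X₁, …, X_r` and `Y₁, …, Y_r`.  If
`v_X(a) = v_Y(a')` and `v_X(b) = v_Y(b')` are nonempty Venn regions, then
`v_X(a + b) = v_Y(a' + b')`: the addition induced on the Venn regions via coordinates is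
independent of the choice of basis for `𝒱`. -/
theorem stmt_9 {α : Type*} [DecidableEq α] (S : Finset α)
    (V : Finset (Finset α)) (r : ℕ) (X Y : Fin r → Finset α)
    (hVS : ∀ A ∈ V, A ⊆ S) (hV0 : (∅ : Finset α) ∈ V)
    (hVcl : ∀ A ∈ V, ∀ B ∈ V, A ∆ B ∈ V)
    (hXbasis : Set.range (zSet X) = ↑V ∧ Function.Injective (zSet X))
    (hYbasis : Set.range (zSet Y) = ↑V ∧ Function.Injective (zSet Y))
    (a a' b b' : Fin r → ZMod 2)
    (haa : vennRegion S X a = vennRegion S Y a')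
    (hbb : vennRegion S X b = vennRegion S Y b')
    (hane : (vennRegion S X a).Nonempty)
    (hbne : (vennRegion S X b).Nonempty) :
    vennRegion S X (a + b) = vennRegion S Y (a' + b') := by
  obtain ⟨x, hx⟩ := hane
  obtain ⟨y, hy⟩ := hbne
  ext w
  rw [mem_vennRegion_add_iff S X a b hx hy,
    mem_vennRegion_add_iff S Y a' b' (haa ▸ hx) (hbb ▸ hy), hXbasis.1, hYbasis.1]
end

section
/- Let S = B ⊔ D ⊆ 𝔽₂ⁿ be finite with affine basis B and D = S \ B, with |S| = k and dim(S) = d. Then the collection {X_w : w ∈ D} is a basis for E(S) as a vector space over 𝔽₂ under symmetric difference, and dim E(S) = k − (d + 1). -/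
/-!
Every `X_w` meets `D` in exactly `{w}`, so `△_{w ∈ D'} X_w` meets `D` in exactly `D'`
(`mem_sumsetMap_iff`); this gives injectivity. Conversely, for `Z ∈ E(S)` the set
`Z ∆ △_{w ∈ Z ∩ D} X_w` is an even zero-sum set contained in `B`, and the affine independence of
`B` leaves only the empty one (`eq_empty_of_affineIndependent`); this gives surjectivity. Hence
`|E(S)| = 2 ^ |D|`, where `|D| = k - |B|`, and `|B| = d + 1` unless `S` is empty.
-/

open scoped symmDiff

/-- Given, for each dependent point `w`, the even zero-sum set `X_w = {w} ∪ B_w`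
(encoded by the function `ξ`), the sumset map sends a set `D'` of dependent points to the
symmetric difference `△_{w ∈ D'} X_w` (with `∅ ↦ ∅`). -/
def sumsetMap {n : ℕ} (ξ : (Fin n → ZMod 2) → Finset (Fin n → ZMod 2))
    (D' : Finset (Fin n → ZMod 2)) : Finset (Fin n → ZMod 2) :=
  D'.fold (· ∆ ·) ∅ ξ

/-- `E(S)`: the collection of all even zero-sum subsets of `S`, as a finset. -/
def evenZeroSums (n : ℕ) (S : Finset (Fin n → ZMod 2)) : Finset (Finset (Fin n → ZMod 2)) :=
  S.powerset.filter (fun Z => Even Z.card ∧ (∑ x ∈ Z, x) = 0)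

/-- In characteristic two the sum over a symmetric difference is additive: the points common to
both sets are counted twice. -/
lemma sum_symmDiff_zmod_two {α M : Type*} [DecidableEq α] [AddCommGroup M] [Module (ZMod 2) M]
    (f : α → M) (s t : Finset α) :
    ∑ x ∈ s ∆ t, f x = ∑ x ∈ s, f x + ∑ x ∈ t, f x := by
  have hd : Disjoint (s \ t) (t \ s) := disjoint_sdiff_sdiff
  have h2 : ∀ a : M, a + a = 0 := fun a => by
    have h : (2 : ZMod 2) • a = 0 := by
      rw [show (2 : ZMod 2) = 0 from rfl, zero_smul]
    rwa [two_smul] at h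
  rw [symmDiff_def, Finset.sup_eq_union, Finset.sum_union hd,
    ← Finset.sum_inter_add_sum_sdiff s t f, ← Finset.sum_inter_add_sum_sdiff t s f,
    Finset.inter_comm t s]
  have := h2 (∑ x ∈ s ∩ t, f x)
  generalize ∑ x ∈ s ∩ t, f x = a at this ⊢
  calc _ = (a + a) + (∑ x ∈ s \ t, f x + ∑ x ∈ t \ s, f x) := by rw [this, zero_add]
    _ = _ := by abel

lemma symmDiff_mem_evenZeroSums {n : ℕ} {S X Y : Finset (Fin n → ZMod 2)}
    (hX : X ∈ evenZeroSums n S) (hY : Y ∈ evenZeroSums n S) : X ∆ Y ∈ evenZeroSums n S := by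
  simp only [evenZeroSums, Finset.mem_filter, Finset.mem_powerset] at hX hY ⊢
  obtain ⟨hXS, hXe, hX0⟩ := hX
  obtain ⟨hYS, hYe, hY0⟩ := hY
  refine ⟨fun x hx => ?_, ?_, ?_⟩
  · rcases Finset.mem_symmDiff.1 hx with h | h
    · exact hXS h.1
    · exact hYS h.1
  -- The parity of a cardinality is the sum of the constant function `1` in `ZMod 2`.
  · have h := sum_symmDiff_zmod_two (fun _ => (1 : ZMod 2)) X Y
    simp only [Finset.sum_const, nsmul_eq_mul, mul_one] at h
    rw [← ZMod.natCast_eq_zero_iff_even] at hXe hYe ⊢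
    rw [h, hXe, hYe, add_zero]
  · have h := sum_symmDiff_zmod_two (fun x : Fin n → ZMod 2 => x) X Y
    rw [h, hX0, hY0, add_zero]

lemma sumsetMap_empty {n : ℕ} (ξ : (Fin n → ZMod 2) → Finset (Fin n → ZMod 2)) :
    sumsetMap ξ ∅ = ∅ := rfl

lemma sumsetMap_insert {n : ℕ} (ξ : (Fin n → ZMod 2) → Finset (Fin n → ZMod 2))
    {w : Fin n → ZMod 2} {D' : Finset (Fin n → ZMod 2)} (hw : w ∉ D') :
    sumsetMap ξ (insert w D') = ξ w ∆ sumsetMap ξ D' :=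
  Finset.fold_insert hw

lemma sumsetMap_mem_evenZeroSums {n : ℕ} {S D : Finset (Fin n → ZMod 2)}
    {ξ : (Fin n → ZMod 2) → Finset (Fin n → ZMod 2)} (h : ∀ w ∈ D, ξ w ∈ evenZeroSums n S) :
    sumsetMap ξ D ∈ evenZeroSums n S := by
  induction D using Finset.induction_on with
  | empty => simp [sumsetMap_empty, evenZeroSums]
  | insert w D' hw ih =>
    rw [sumsetMap_insert ξ hw]
    exact symmDiff_mem_evenZeroSums (h w (Finset.mem_insert_self _ _))
      (ih fun v hv => h v (Finset.mem_insert_of_mem hv))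

/-- If `ξ w` meets `D` only in `w` for every `w ∈ D`, the symmetric difference over `D'` meets `D`
exactly in `D'`. -/
lemma mem_sumsetMap_iff {n : ℕ} {D D' : Finset (Fin n → ZMod 2)}
    {ξ : (Fin n → ZMod 2) → Finset (Fin n → ZMod 2)}
    (h : ∀ w ∈ D, ∀ x ∈ D, x ∈ ξ w ↔ x = w) (hD' : D' ⊆ D) {x : Fin n → ZMod 2} (hx : x ∈ D) :
    x ∈ sumsetMap ξ D' ↔ x ∈ D' := by
  induction D' using Finset.induction_on with
  | empty => simp [sumsetMap_empty]
  | insert w D' hw ih =>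
    have hwD : w ∈ D := hD' (Finset.mem_insert_self _ _)
    have ih := ih ((Finset.subset_insert _ _).trans hD')
    rw [sumsetMap_insert ξ hw, Finset.mem_symmDiff, h w hwD x hx, ih, Finset.mem_insert]
    by_cases hxw : x = w
    · subst hxw; simp [hw]
    · simp [hxw]

/-- An affinely independent set over `𝔽₂` contains no nonempty even zero-sum set: such a set is an
affine dependence with all weights equal to `1`. -/
lemma eq_empty_of_affineIndependent {n : ℕ} {B Y : Finset (Fin n → ZMod 2)}
    (hind : AffineIndependent (ZMod 2)
      (fun x : (B : Set (Fin n → ZMod 2)) => (x : Fin n → ZMod 2)))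
    (hY : Y ∈ evenZeroSums n B) : Y = ∅ := by
  classical
  simp only [evenZeroSums, Finset.mem_filter, Finset.mem_powerset] at hY
  obtain ⟨hYB, hYe, hY0⟩ := hY
  rw [affineIndependent_iff] at hind
  have hmem : ∀ x ∈ Y, x ∈ (B : Set (Fin n → ZMod 2)) := fun x hx => hYB hx
  have h := hind (Y.subtype (· ∈ (B : Set (Fin n → ZMod 2)))) (fun _ => 1)
    (by
      rw [Finset.sum_subtype_of_mem (fun _ => (1 : ZMod 2)) hmem]
      simpa using (ZMod.natCast_eq_zero_iff_even).2 hYe)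
    (by
      simp only [one_smul]
      rw [Finset.sum_subtype_of_mem (fun x => x) hmem, hY0])
  refine Finset.eq_empty_of_forall_notMem fun x hx => ?_
  exact one_ne_zero (h ⟨x, hmem x hx⟩ (Finset.mem_subtype.2 hx))

/-- Let `S = B ⊔ D ⊆ 𝔽₂ⁿ` be finite with affine basis `B` and `D = S \ B`, with
`|S| = k` and `dim S = d` (the dimension of the affine span of `S`).  Then the family
`{X_w : w ∈ D}` (encoded by `ξ`) is a basis for `E(S)` over `𝔽₂`: the sumset map
`D' ↦ △_{w ∈ D'} X_w` is a bijection from `𝒫(D)` onto `E(S)`; and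
`dim E(S) = k − (d + 1)`, i.e. `|E(S)| = 2 ^ (k − (d + 1))`. -/
theorem stmt_15 (n k d : ℕ) (S B D : Finset (Fin n → ZMod 2))
    (hSBD : S = B ∪ D) (hdisj : Disjoint B D)
    (hind : AffineIndependent (ZMod 2)
      (fun x : (B : Set (Fin n → ZMod 2)) => (x : Fin n → ZMod 2)))
    (hspan : ∀ x ∈ S, x ∈ affineSpan (ZMod 2) (B : Set (Fin n → ZMod 2)))
    (hk : S.card = k)
    (hd : Module.finrank (ZMod 2)
      (affineSpan (ZMod 2) (S : Set (Fin n → ZMod 2))).direction = d)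
    (ξ : (Fin n → ZMod 2) → Finset (Fin n → ZMod 2))
    (hξ : ∀ w ∈ D, w ∈ ξ w ∧ ξ w ⊆ insert w B ∧
      Odd ((ξ w).erase w).card ∧ (∑ x ∈ (ξ w).erase w, x) = w) :
    (∀ D' ⊆ D, sumsetMap ξ D' ∈ evenZeroSums n S) ∧
    (∀ D₁ ⊆ D, ∀ D₂ ⊆ D, sumsetMap ξ D₁ = sumsetMap ξ D₂ → D₁ = D₂) ∧
    (∀ Z ∈ evenZeroSums n S, ∃ D' ⊆ D, sumsetMap ξ D' = Z) ∧
    (evenZeroSums n S).card = 2 ^ (k - (d + 1)) := by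
  subst hSBD
  have hξE : ∀ w ∈ D, ξ w ∈ evenZeroSums n (B ∪ D) := by
    intro w hw
    obtain ⟨hwξ, hsub, hodd, hsum⟩ := hξ w hw
    simp only [evenZeroSums, Finset.mem_filter, Finset.mem_powerset]
    refine ⟨hsub.trans (Finset.insert_subset (Finset.mem_union_right _ hw)
      Finset.subset_union_left), ?_, ?_⟩
    · rw [← Finset.card_erase_add_one hwξ]
      exact hodd.add_one
    · rw [← Finset.sum_erase_add _ _ hwξ, hsum]
      exact funext fun i => CharTwo.add_self_eq_zero (w i)
  have hξD : ∀ w ∈ D, ∀ x ∈ D, x ∈ ξ w ↔ x = w := by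
    intro w hw x hx
    obtain ⟨hwξ, hsub, -, -⟩ := hξ w hw
    refine ⟨fun h => ?_, fun h => h ▸ hwξ⟩
    rcases Finset.mem_insert.1 (hsub h) with h | h
    · exact h
    · exact absurd hx (Finset.disjoint_left.1 hdisj h)
  have hmem : ∀ D' ⊆ D, sumsetMap ξ D' ∈ evenZeroSums n (B ∪ D) := fun D' hD' =>
    sumsetMap_mem_evenZeroSums fun w hw => hξE w (hD' hw)
  have hinj : ∀ D₁ ⊆ D, ∀ D₂ ⊆ D, sumsetMap ξ D₁ = sumsetMap ξ D₂ → D₁ = D₂ := by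
    intro D₁ h₁ D₂ h₂ h
    ext x
    constructor <;> intro hx
    · rwa [← mem_sumsetMap_iff hξD h₂ (h₁ hx), ← h, mem_sumsetMap_iff hξD h₁ (h₁ hx)]
    · rwa [← mem_sumsetMap_iff hξD h₁ (h₂ hx), h, mem_sumsetMap_iff hξD h₂ (h₂ hx)]
  have hsurj : ∀ Z ∈ evenZeroSums n (B ∪ D), ∃ D' ⊆ D, sumsetMap ξ D' = Z := by
    intro Z hZ
    have hsub : Z ∩ D ⊆ D := Finset.inter_subset_right
    refine ⟨Z ∩ D, hsub, ?_⟩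
    have hE := symmDiff_mem_evenZeroSums (hmem _ hsub) hZ
    have hB : sumsetMap ξ (Z ∩ D) ∆ Z ∈ evenZeroSums n B := by
      simp only [evenZeroSums, Finset.mem_filter, Finset.mem_powerset] at hE ⊢
      refine ⟨fun x hx => ?_, hE.2⟩
      rcases Finset.mem_union.1 (hE.1 hx) with h | h
      · exact h
      · rw [Finset.mem_symmDiff, mem_sumsetMap_iff hξD hsub h, Finset.mem_inter] at hx
        tauto
    exact symmDiff_eq_bot.1 (eq_empty_of_affineIndependent hind hB)
  refine ⟨hmem, hinj, hsurj, ?_⟩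
  have hcard : (evenZeroSums n (B ∪ D)).card = 2 ^ D.card := by
    rw [← Finset.card_powerset]
    symm
    refine Finset.card_bij (fun D' _ => sumsetMap ξ D') (fun D' h => hmem D' (by simpa using h))
      (fun D₁ h₁ D₂ h₂ h => hinj D₁ (by simpa using h₁) D₂ (by simpa using h₂) h)
      (fun Z hZ => ?_)
    obtain ⟨D', h, h'⟩ := hsurj Z hZ
    exact ⟨D', by simpa using h, h'⟩
  rw [hcard]
  congr 1
  rw [Finset.card_union_of_disjoint hdisj] at hk
  rcases B.eq_empty_or_nonempty with rfl | hne
  -- The affine span of the empty set is empty, so `D` is empty and truncation gives `0 = 0`.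
  · have hD : D = ∅ := Finset.eq_empty_of_forall_notMem fun x hx => by
      have := hspan x (by simpa using hx)
      rw [Finset.coe_empty, AffineSubspace.span_empty] at this
      exact AffineSubspace.notMem_bot _ _ x this
    subst hD
    simp at hk
    simp [← hk]
  · have hspanEq : affineSpan (ZMod 2) ((B ∪ D : Finset (Fin n → ZMod 2)) : Set (Fin n → ZMod 2))
        = affineSpan (ZMod 2) (B : Set (Fin n → ZMod 2)) := by
      refine le_antisymm (affineSpan_le.2 fun x hx => hspan x hx) (affineSpan_mono _ ?_)
      simp
    have hBcard : B.card = d + 1 := by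
      rw [hspanEq, direction_affineSpan] at hd
      have hc : Fintype.card (B : Set (Fin n → ZMod 2)) = (B.card - 1) + 1 := by
        have := hne.card_pos
        simp
        omega
      have hr := hind.finrank_vectorSpan hc
      rw [Subtype.range_coe_subtype] at hr
      have hr' : Module.finrank (ZMod 2) (vectorSpan (ZMod 2) (B : Set (Fin n → ZMod 2)))
          = B.card - 1 := hr
      have := hne.card_pos
      omega
    omega
end
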